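/- arXiv:1708.06012 — 3 statements merged into one kernel-verified Lean document; each statement's English description precedes it below -/
import Mathlib

section
/- Let F be a field, μ ≥ 1, let Ψ be a (μ+1) × μ generalized Vandermonde matrix (entries Ψ_{i,j} = e_i^{c+j−1} for pairwise distinct nonzero e_1, …, e_{μ+1} in F and an integer c ≥ 0), and let Δ be a (μ+1) × (μ+1) diagonal matrix whose diagonal entries are nonzero and pairwise distinct. If A, B, A′, B′ are symmetric μ × μ matrices over F satisfying Ψ A + Δ Ψ B = Ψ A′ + Δ Ψ B′, then A = A′ and B = B′. (Equivalently: the equation X = Ψ A + Δ Ψ B can be solved uniquely for unknown symmetric μ × μ matrices A and B.) -/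
open Matrix

/-- The generalized Vandermonde matrix with offset `c`: entries `A i j = e i ^ (c + j)`
(0-indexed; this corresponds to `A_{i,j} = e_i^{c+j-1}` with 1-based indexing). -/
def genVandermonde {F : Type*} [Field F] (m ℓ : ℕ) (e : Fin m → F) (c : ℕ) :
    Matrix (Fin m) (Fin ℓ) F :=
  Matrix.of fun i j => e i ^ (c + j.val)

/-!
Multiplying `Ψ A + Δ Ψ B = 0` on the right by `Ψᵀ` gives `P + Δ Q = 0` with `P = Ψ A Ψᵀ` and
`Q = Ψ B Ψᵀ` symmetric. Then `Δ Q = -P` is symmetric too, which forces `Q` to be diagonal because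
the entries of `Δ` are distinct. Each row of `Ψ B`, regarded as a vector `v`, thus satisfies
`Ψ v = 0` off a single coordinate; as any `μ` rows of `Ψ` are independent, `v = 0`. So `Ψ B = 0`,
whence `B = 0`, and then `Ψ A = 0` gives `A = 0`.
-/

section MatrixProducts

variable {R m n : Type*} [Fintype n]

theorem isSymm_mul_mul_transpose [CommSemiring R] {A : Matrix n n R} (hA : A.IsSymm)
    (Ψ : Matrix m n R) : (Ψ * A * Ψᵀ).IsSymm := by
  rw [Matrix.IsSymm, transpose_mul, transpose_mul, transpose_transpose, hA.eq, Matrix.mul_assoc]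

theorem eq_zero_of_mul_eq_zero_of_mulVec [Semiring R] {p : Type*} {Ψ : Matrix m n R}
    (hΨ : ∀ v, Ψ *ᵥ v = 0 → v = 0) {A : Matrix n p R} (hΨA : Ψ * A = 0) : A = 0 := by
  ext k l
  have hcol : Ψ *ᵥ A.col l = 0 := congrArg (·.col l) hΨA
  exact congrFun (hΨ (A.col l) hcol) k

-- `hΨ` says that `Ψ` encodes injectively a code of minimum distance at least two.
theorem eq_zero_of_isDiag_mul_transpose [CommSemiring R] [Fintype m] [DecidableEq R]
    {Ψ M : Matrix m n R} (hΨ : ∀ v, hammingNorm (Ψ *ᵥ v) ≤ 1 → v = 0) (hM : (M * Ψᵀ).IsDiag) :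
    M = 0 := by
  funext i
  have hrow : ∀ j, (Ψ *ᵥ M i) j ≠ 0 → j = i := by
    intro j hj
    by_contra hji
    have hzero : (M * Ψᵀ) i j = 0 := hM (Ne.symm hji)
    rw [mul_apply_eq_vecMul, vecMul_transpose] at hzero
    exact hj hzero
  refine hΨ (M i) (Finset.card_le_one_iff.mpr fun {j k} hj hk => ?_)
  rw [hrow j (Finset.mem_filter.mp hj).2, hrow k (Finset.mem_filter.mp hk).2]

end MatrixProducts

section DiagonalPencil

theorem isDiag_of_isSymm_diagonal_mul {R m : Type*} [Ring R] [NoZeroDivisors R] [Fintype m]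
    [DecidableEq m] {δ : m → R} (hδ : Function.Injective δ) {Q : Matrix m m R} (hQ : Q.IsSymm)
    (hδQ : (diagonal δ * Q).IsSymm) : Q.IsDiag := by
  intro i j hij
  have hentry : δ j * Q i j = δ i * Q i j := by
    simpa only [diagonal_mul, hQ.apply i j] using hδQ.apply i j
  have hprod : (δ j - δ i) * Q i j = 0 := by rw [sub_mul, hentry, sub_self]
  exact (mul_eq_zero.mp hprod).resolve_left (sub_ne_zero.mpr (hδ.ne hij.symm))

variable {R m n : Type*} [CommRing R] [NoZeroDivisors R] [DecidableEq R] [Fintype m] [DecidableEq m]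
  [Fintype n] {δ : m → R} {Ψ : Matrix m n R}

theorem eq_zero_of_mul_add_diagonal_mul_mul_eq_zero
    (hΨ : ∀ v, hammingNorm (Ψ *ᵥ v) ≤ 1 → v = 0) (hδ : Function.Injective δ)
    {A B : Matrix n n R} (hA : A.IsSymm) (hB : B.IsSymm)
    (h : Ψ * A + diagonal δ * Ψ * B = 0) : A = 0 ∧ B = 0 := by
  have hP : (Ψ * A * Ψᵀ).IsSymm := isSymm_mul_mul_transpose hA Ψ
  have hQ : (Ψ * B * Ψᵀ).IsSymm := isSymm_mul_mul_transpose hB Ψ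
  have hδQ : diagonal δ * (Ψ * B * Ψᵀ) = -(Ψ * A * Ψᵀ) := by
    rw [← Matrix.mul_assoc, ← Matrix.mul_assoc, eq_neg_of_add_eq_zero_right h, Matrix.neg_mul]
  have hQdiag : (Ψ * B * Ψᵀ).IsDiag := isDiag_of_isSymm_diagonal_mul hδ hQ (hδQ ▸ hP.neg)
  have hΨB : Ψ * B = 0 := eq_zero_of_isDiag_mul_transpose hΨ hQdiag
  have hΨA : Ψ * A = 0 := by
    rwa [Matrix.mul_assoc, hΨB, Matrix.mul_zero, add_zero] at h
  have hinj : ∀ v, Ψ *ᵥ v = 0 → v = 0 := fun v hv => hΨ v (by simp [hv])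
  exact ⟨eq_zero_of_mul_eq_zero_of_mulVec hinj hΨA, eq_zero_of_mul_eq_zero_of_mulVec hinj hΨB⟩

theorem genVandermonde_diag_unique_solve_general
    (hΨ : ∀ v, hammingNorm (Ψ *ᵥ v) ≤ 1 → v = 0) (hδ : Function.Injective δ)
    {A B A' B' : Matrix n n R} (hA : A.IsSymm) (hB : B.IsSymm) (hA' : A'.IsSymm) (hB' : B'.IsSymm)
    (h : Ψ * A + diagonal δ * Ψ * B = Ψ * A' + diagonal δ * Ψ * B') : A = A' ∧ B = B' := by
  have hdiff : Ψ * (A - A') + diagonal δ * Ψ * (B - B') = 0 := by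
    rw [Matrix.mul_sub, Matrix.mul_sub, sub_add_sub_comm, h, sub_self]
  simpa only [sub_eq_zero] using
    eq_zero_of_mul_add_diagonal_mul_mul_eq_zero hΨ hδ (hA.sub hA') (hB.sub hB') hdiff

end DiagonalPencil

section GenVandermonde

variable {F : Type*} [Field F] {m ℓ c : ℕ} {e : Fin m → F}

theorem genVandermonde_mulVec_apply (v : Fin ℓ → F) (i : Fin m) :
    (genVandermonde m ℓ e c *ᵥ v) i = e i ^ c * ∑ k, v k * e i ^ (k : ℕ) := by
  simp only [genVandermonde, mulVec, dotProduct, of_apply, pow_add, Finset.mul_sum]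
  exact Finset.sum_congr rfl fun k _ => by ring

theorem eq_zero_of_genVandermonde_mulVec_eq_zero_on {s : Finset (Fin m)} (hs : ℓ ≤ s.card)
    (he : ∀ i ∈ s, e i ≠ 0) (hinj : Set.InjOn e s) {v : Fin ℓ → F}
    (hv : ∀ i ∈ s, (genVandermonde m ℓ e c *ᵥ v) i = 0) : v = 0 := by
  have hmem := s.orderEmbOfCardLe_mem hs
  refine eq_zero_of_forall_index_sum_mul_pow_eq_zero (f := e ∘ s.orderEmbOfCardLe hs)
    (fun a b hab => (s.orderEmbOfCardLe hs).injective (hinj (hmem a) (hmem b) hab)) fun j => ?_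
  have hj := hv _ (hmem j)
  rw [genVandermonde_mulVec_apply] at hj
  exact (mul_eq_zero.mp hj).resolve_left (pow_ne_zero c (he _ (hmem j)))

theorem eq_zero_of_add_hammingNorm_genVandermonde_mulVec_le [DecidableEq F] (he : ∀ i, e i ≠ 0)
    (hinj : Function.Injective e) {v : Fin ℓ → F}
    (hv : ℓ + hammingNorm (genVandermonde m ℓ e c *ᵥ v) ≤ m) : v = 0 := by
  let zeros : Finset (Fin m) := {i | (genVandermonde m ℓ e c *ᵥ v) i = 0}
  have hcard : zeros.card + hammingNorm (genVandermonde m ℓ e c *ᵥ v) = m :=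
    (Finset.card_filter_add_card_filter_not _).trans (Finset.card_fin m)
  exact eq_zero_of_genVandermonde_mulVec_eq_zero_on (s := zeros) (by lia) (fun i _ => he i)
    hinj.injOn fun i hi => (Finset.mem_filter.mp hi).2

end GenVandermonde

/-- let `Ψ` be a `(μ+1) × μ` generalized Vandermonde matrix (pairwise
distinct nonzero `e i`, offset `c ≥ 0`) and let `Δ` be a diagonal `(μ+1) × (μ+1)` matrix
with nonzero pairwise distinct diagonal entries.  If symmetric `μ × μ` matrices
`A, B, A', B'` satisfy `Ψ A + Δ Ψ B = Ψ A' + Δ Ψ B'`, then `A = A'` and `B = B'`,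
i.e. `X = Ψ A + Δ Ψ B` is uniquely solvable for symmetric `A`, `B`. -/
theorem genVandermonde_diag_unique_solve {F : Type*} [Field F] (μ : ℕ) (hμ : 1 ≤ μ)
    (c : ℕ) (e : Fin (μ + 1) → F) (he : ∀ i, e i ≠ 0) (hinj : Function.Injective e)
    (δ : Fin (μ + 1) → F) (hδ0 : ∀ i, δ i ≠ 0) (hδinj : Function.Injective δ)
    (A B A' B' : Matrix (Fin μ) (Fin μ) F)
    (hA : A.IsSymm) (hB : B.IsSymm) (hA' : A'.IsSymm) (hB' : B'.IsSymm)
    (h : genVandermonde (μ + 1) μ e c * A + Matrix.diagonal δ * genVandermonde (μ + 1) μ e c * B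
        = genVandermonde (μ + 1) μ e c * A' + Matrix.diagonal δ * genVandermonde (μ + 1) μ e c * B') :
    A = A' ∧ B = B' := by
  classical
  exact genVandermonde_diag_unique_solve_general
    (fun _ hv => eq_zero_of_add_hammingNorm_genVandermonde_mulVec_le he hinj
      (Nat.add_le_add_left hv μ))
    hδinj hA hB hA' hB' h
end

section
/- In the setting of the repair procedure with m ∣ z, d = (m+1)μ, β = z/m, failed node f and helper set H = {ℓ_1, …, ℓ_d} with pairwise distinct nonzero e_{ℓ_1}, …, e_{ℓ_d}: for every 2 ≤ i ≤ β, let Υ̂_H(i) = Υ_H(i) − W_i · S_{2(i−1)m} · (e_f^{(i−1)mμ} φ_f)^T, where Υ_H(i) is the d × 1 column vector of repair symbols r_i(ℓ, f) for ℓ ∈ H and W_i is the d × μ matrix whose row for helper ℓ is e_ℓ^{(i−1)mμ−μ} φ_ℓ. Partition (Ω_H(i))^{−1} = [Θ_H(i); Ξ_H(i)] with Θ_H(i) the top (d−μ) × d submatrix and Ξ_H(i) the bottom μ × d submatrix. Then ψ_f(i) M_i = (Θ_H(i) Υ̂_H(i))^T and e_f^{imμ} φ_f S_{2im} = e_f^μ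 (Ξ_H(i) Υ̂_H(i))^T. -/
open Matrix Finset

section ProductMatrixBAMSR

variable {F : Type*} [Field F]

/-- The data matrix `M` of the bandwidth adaptive product-matrix MSR code:
a `((z+1)μ) × (zμ)` matrix built from a (1-indexed) family `S 1, …, S (2z)` of `μ × μ`
matrices, with `μ × μ` blocks `B(t,t) = S (2t-1)` for `1 ≤ t ≤ z`,
`B(t,t+1) = S (2t)` for `1 ≤ t ≤ z-1`, `B(t+1,t) = S (2t)` for `1 ≤ t ≤ z`, and all
other blocks zero. -/
def dataMatrix (z μ : ℕ) (hμ : 0 < μ) (S : ℕ → Matrix (Fin μ) (Fin μ) F) :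
    Matrix (Fin ((z + 1) * μ)) (Fin (z * μ)) F :=
  Matrix.of fun r c =>
    if r.val / μ = c.val / μ then
      S (2 * (c.val / μ) + 1) ⟨r.val % μ, Nat.mod_lt _ hμ⟩ ⟨c.val % μ, Nat.mod_lt _ hμ⟩
    else if r.val / μ + 1 = c.val / μ then
      S (2 * (r.val / μ) + 2) ⟨r.val % μ, Nat.mod_lt _ hμ⟩ ⟨c.val % μ, Nat.mod_lt _ hμ⟩
    else if r.val / μ = c.val / μ + 1 then
      S (2 * (c.val / μ) + 2) ⟨r.val % μ, Nat.mod_lt _ hμ⟩ ⟨c.val % μ, Nat.mod_lt _ hμ⟩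
    else 0

/-- Coefficient (row) vector of a node with evaluation point `e`:
`ψ = (e, e², …, e^{(z+1)μ})`. -/
def psiVec (z μ : ℕ) (e : F) : Fin ((z + 1) * μ) → F := fun r => e ^ (r.val + 1)

/-- Stored content of a node with evaluation point `e`: the row vector `x = ψ M`
of length `α = zμ`. -/
def stored (z μ : ℕ) (hμ : 0 < μ) (S : ℕ → Matrix (Fin μ) (Fin μ) F) (e : F) :
    Fin (z * μ) → F :=
  Matrix.vecMul (psiVec z μ e) (dataMatrix z μ hμ S)

/-- The row vector `φ = (e, e², …, e^μ)`. -/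
def phiVec (μ : ℕ) (e : F) : Fin μ → F := fun a => e ^ (a.val + 1)

/-- The `i`-th (1-indexed) length-`mμ` segment of the coefficient vector `ψ`:
`ψ(i) = (e^{(i-1)mμ+1}, …, e^{imμ})`. -/
def psiSeg (m μ i : ℕ) (e : F) : Fin (m * μ) → F :=
  fun a => e ^ ((i - 1) * (m * μ) + a.val + 1)

lemma seg_bound {z μ m i : ℕ} (hμ : 0 < μ) (hm : 0 < m) (hi1 : 1 ≤ i)
    (hiz : i ≤ z / m) (hdvd : m ∣ z) {a : ℕ} (ha : a < m * μ) :
    (i - 1) * (m * μ) + a < z * μ := by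
  obtain ⟨t, rfl⟩ := hdvd
  rw [Nat.mul_div_cancel_left t hm] at hiz
  obtain ⟨i', rfl⟩ := Nat.exists_eq_add_of_le hi1
  have h2 : (1 + i' - 1) * (m * μ) + m * μ = (1 + i') * (m * μ) := by
    have : 1 + i' - 1 = i' := by omega
    rw [this]; ring
  have h3 : (1 + i') * (m * μ) ≤ m * t * μ := by
    have hit : (1 + i') * m ≤ m * t := by nlinarith
    calc (1 + i') * (m * μ) = (1 + i') * m * μ := by ring
      _ ≤ m * t * μ := Nat.mul_le_mul_right _ hit
  omega

/-- The `i`-th (1-indexed) length-`mμ` segment of the stored content `x = ψ M`. -/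
def xSeg (z μ m i : ℕ) (hμ : 0 < μ) (hm : 0 < m) (hi1 : 1 ≤ i) (hiz : i ≤ z / m)
    (hdvd : m ∣ z) (S : ℕ → Matrix (Fin μ) (Fin μ) F) (e : F) : Fin (m * μ) → F :=
  fun a => stored z μ hμ S e ⟨(i - 1) * (m * μ) + a.val, seg_bound hμ hm hi1 hiz hdvd a.isLt⟩

/-- The repair symbol `r_i(h, f) = x_h(i) · (ψ_f(i))ᵀ` sent by a helper with evaluation
point `eh` for a failed node with evaluation point `ef`. -/
def repairSym (z μ m i : ℕ) (hμ : 0 < μ) (hm : 0 < m) (hi1 : 1 ≤ i) (hiz : i ≤ z / m)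
    (hdvd : m ∣ z) (S : ℕ → Matrix (Fin μ) (Fin μ) F) (eh ef : F) : F :=
  ∑ a, xSeg z μ m i hμ hm hi1 hiz hdvd S eh a * psiSeg m μ i ef a

/-- The `i`-th (1-indexed) diagonal `mμ × mμ` submatrix `M_i` of the data matrix,
consisting of rows and columns `(i-1)mμ+1, …, imμ`. -/
def subM (z μ m i : ℕ) (hμ : 0 < μ) (hm : 0 < m) (hi1 : 1 ≤ i) (hiz : i ≤ z / m)
    (hdvd : m ∣ z) (S : ℕ → Matrix (Fin μ) (Fin μ) F) :
    Matrix (Fin (m * μ)) (Fin (m * μ)) F :=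
  Matrix.of fun a b =>
    dataMatrix z μ hμ S
      ⟨(i - 1) * (m * μ) + a.val,
        lt_of_lt_of_le (seg_bound hμ hm hi1 hiz hdvd a.isLt)
          (Nat.mul_le_mul_right _ (Nat.le_succ z))⟩
      ⟨(i - 1) * (m * μ) + b.val, seg_bound hμ hm hi1 hiz hdvd b.isLt⟩

/-- The `d × d` matrix `Ω_H(i)` (with `d = (m+1)μ`) whose row for helper `ℓ r` is
`(e_{ℓ r}^{(i-1)mμ+1}, …, e_{ℓ r}^{(i-1)mμ+d})`, i.e. `[ψ_{ℓ r}(i), e_{ℓ r}^{imμ} φ_{ℓ r}]`. -/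
def OmegaMat (n μ m i : ℕ) (e : Fin n → F) (ℓ : Fin ((m + 1) * μ) → Fin n) :
    Matrix (Fin ((m + 1) * μ)) (Fin ((m + 1) * μ)) F :=
  Matrix.of fun r c => e (ℓ r) ^ ((i - 1) * (m * μ) + c.val + 1)

lemma nmat_aux1 {m μ r : ℕ} (h : r < (m + 1) * μ) (h2 : ¬ r < m * μ) : r - m * μ < μ := by
  have hh : (m + 1) * μ = m * μ + μ := by ring
  omega

lemma nmat_aux2 {m μ c : ℕ} (hm : 0 < m) (h : c < m * μ) (h2 : (m - 1) * μ ≤ c) :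
    c - (m - 1) * μ < μ := by
  have h3 : (m - 1) * μ + μ = m * μ := by
    cases m with
    | zero => omega
    | succ k => rw [Nat.succ_sub_one, Nat.succ_mul]
  omega

/-- The `d × mμ` matrix `N_i` whose top `mμ` rows form the matrix `Mi` and whose bottom
`μ` rows form the block row `[O, …, O, S₂]` of `m-1` zero `μ × μ` blocks followed by `S₂`. -/
def Nmat (μ m : ℕ) (hm : 0 < m) (Mi : Matrix (Fin (m * μ)) (Fin (m * μ)) F)
    (S2 : Matrix (Fin μ) (Fin μ) F) : Matrix (Fin ((m + 1) * μ)) (Fin (m * μ)) F :=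
  Matrix.of fun r c =>
    if h : r.val < m * μ then Mi ⟨r.val, h⟩ c
    else if h2 : (m - 1) * μ ≤ c.val then
      S2 ⟨r.val - m * μ, nmat_aux1 r.isLt h⟩ ⟨c.val - (m - 1) * μ, nmat_aux2 hm c.isLt h2⟩
    else 0

/-- The top `(d-μ) × d = mμ × d` submatrix `Θ` of a `d × d` matrix (`d = (m+1)μ`). -/
def ThetaMat (μ m : ℕ) (A : Matrix (Fin ((m + 1) * μ)) (Fin ((m + 1) * μ)) F) :
    Matrix (Fin (m * μ)) (Fin ((m + 1) * μ)) F :=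
  Matrix.of fun r c =>
    A ⟨r.val, lt_of_lt_of_le r.isLt (Nat.mul_le_mul_right _ (Nat.le_succ m))⟩ c

/-- The bottom `μ × d` submatrix `Ξ` of a `d × d` matrix (`d = (m+1)μ`). -/
def XiMat (μ m : ℕ) (A : Matrix (Fin ((m + 1) * μ)) (Fin ((m + 1) * μ)) F) :
    Matrix (Fin μ) (Fin ((m + 1) * μ)) F :=
  Matrix.of fun r c =>
    A ⟨m * μ + r.val, by
      have hh : (m + 1) * μ = m * μ + μ := by ring
      have hr := r.isLt
      omega⟩ c

end ProductMatrixBAMSR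

/-! The data matrix is block tridiagonal, so the columns of segment `i` meet, besides zero rows,
only the `d` rows of `N_i = [M_i; O ⋯ O S_{2im}]` and the block row `[S_{2(i-1)m}, O, …, O]` just
above them. Subtracting the contribution of the latter leaves `Υ̂_H(i) = Ω_H(i) N_i ψ_f(i)ᵀ`, where
`Ω_H(i)` is invertible (a Vandermonde matrix with rescaled rows). Inverting it gives `M_i ψ_f(i)ᵀ`
on top and `S_{2im}` times the last `μ` entries of `ψ_f(i)` at the bottom, and the symmetry of the
`S_t` turns these columns into the required rows. -/

lemma sum_fin_eq_sum_window {A : Type*} [AddCommMonoid A] {N o k : ℕ} (h : o + k ≤ N)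
    (g : Fin N → A) (hlo : ∀ r : Fin N, r.val < o → g r = 0)
    (hhi : ∀ r : Fin N, o + k ≤ r.val → g r = 0) :
    ∑ r, g r = ∑ a : Fin k, g ⟨o + a.val, by omega⟩ := by
  symm
  refine Fintype.sum_of_injective (fun a : Fin k => (⟨o + a.val, by omega⟩ : Fin N))
    (fun a b hab => by simpa [Fin.ext_iff] using hab) _ _ (fun r hr => ?_) fun _ => rfl
  by_cases hro : r.val < o
  · exact hlo r hro
  · refine hhi r (not_lt.1 fun hlt => hr ⟨⟨r.val - o, by omega⟩, Fin.ext ?_⟩)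
    simp only
    omega

lemma vecMul_eq_mulVec_of_isSymm {R ι : Type*} [NonUnitalCommSemiring R] [Fintype ι]
    {A : Matrix ι ι R} (hA : A.IsSymm) (v : ι → R) : v ᵥ* A = A *ᵥ v := by
  rw [← mulVec_transpose, hA.eq]

lemma sub_one_mul_add_self {k l : ℕ} (hk : 0 < k) : (k - 1) * l + l = k * l := by
  rw [← Nat.succ_mul, Nat.succ_eq_add_one, Nat.sub_add_cancel hk]

section RepairDecoding

variable {F : Type*} [Field F] {μ z m i n : ℕ}

section DataMatrix

variable (hμ : 0 < μ) (S : ℕ → Matrix (Fin μ) (Fin μ) F)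

-- Block `t - 1` is located by adding `μ` to the index, as `t - 1` would be truncated at `t = 0`.
lemma dataMatrix_superdiag {r : Fin ((z + 1) * μ)} {c : Fin (z * μ)} {t : ℕ} {a b : Fin μ}
    (hr : r.val + μ = t * μ + a.val) (hc : c.val = t * μ + b.val) :
    dataMatrix z μ hμ S r c = S (2 * t) a b := by
  obtain _ | t := t
  · omega
  have hr' : r.val / μ = t ∧ r.val % μ = a.val := (Nat.div_mod_unique hμ).2 ⟨by linarith, a.isLt⟩
  have hc' : c.val / μ = t + 1 ∧ c.val % μ = b.val :=
    (Nat.div_mod_unique hμ).2 ⟨by linarith, b.isLt⟩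
  simp [dataMatrix, hr', hc', mul_add]

lemma dataMatrix_subdiag {r : Fin ((z + 1) * μ)} {c : Fin (z * μ)} {t : ℕ} {a b : Fin μ}
    (hr : r.val = t * μ + a.val) (hc : c.val + μ = t * μ + b.val) :
    dataMatrix z μ hμ S r c = S (2 * t) a b := by
  obtain _ | t := t
  · omega
  have hr' : r.val / μ = t + 1 ∧ r.val % μ = a.val :=
    (Nat.div_mod_unique hμ).2 ⟨by linarith, a.isLt⟩
  have hc' : c.val / μ = t ∧ c.val % μ = b.val := (Nat.div_mod_unique hμ).2 ⟨by linarith, b.isLt⟩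
  simp [dataMatrix, hr', hc', mul_add, add_assoc]

lemma dataMatrix_eq_zero_of_above {r : Fin ((z + 1) * μ)} {c : Fin (z * μ)} {t : ℕ}
    (hr : r.val + μ < t * μ) (hc : t * μ ≤ c.val) : dataMatrix z μ hμ S r c = 0 := by
  have hr' : r.val / μ + 1 < t := by
    rwa [← Nat.add_div_right _ hμ, Nat.div_lt_iff_lt_mul hμ]
  have hc' : t ≤ c.val / μ := (Nat.le_div_iff_mul_le hμ).2 hc
  simp only [dataMatrix, of_apply]
  rw [if_neg (by omega), if_neg (by omega), if_neg (by omega)]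

lemma dataMatrix_eq_zero_of_below {r : Fin ((z + 1) * μ)} {c : Fin (z * μ)} {t : ℕ}
    (hr : t * μ + μ ≤ r.val) (hc : c.val < t * μ) : dataMatrix z μ hμ S r c = 0 := by
  have hr' : t + 1 ≤ r.val / μ := (Nat.le_div_iff_mul_le hμ).2 (by rwa [Nat.succ_mul])
  have hc' : c.val / μ < t := (Nat.div_lt_iff_lt_mul hμ).2 hc
  simp only [dataMatrix, of_apply]
  rw [if_neg (by omega), if_neg (by omega), if_neg (by omega)]

variable {S}

lemma dataMatrix_submatrix_castLE_isSymm (hS : ∀ t, 1 ≤ t → t ≤ 2 * z → (S t).IsSymm) :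
    ((dataMatrix z μ hμ S).submatrix
      (Fin.castLE (Nat.mul_le_mul_right μ z.le_succ)) id).IsSymm := by
  refine IsSymm.ext fun r c => ?_
  have hr : r.val / μ < z := (Nat.div_lt_iff_lt_mul hμ).2 r.isLt
  have hc : c.val / μ < z := (Nat.div_lt_iff_lt_mul hμ).2 c.isLt
  simp only [submatrix_apply, dataMatrix, of_apply, Fin.val_castLE, id]
  rcases lt_trichotomy (r.val / μ) (c.val / μ) with h | h | h
  · rw [if_neg h.ne', if_neg h.ne, if_neg (by omega : ¬ c.val / μ + 1 = r.val / μ),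
      if_neg (by omega : ¬ r.val / μ = c.val / μ + 1)]
    exact if_congr eq_comm ((hS _ (by omega) (by omega)).apply _ _) rfl
  · rw [if_pos h.symm, if_pos h, h, (hS _ (by omega) (by omega)).apply]
  · rw [if_neg h.ne, if_neg h.ne', if_neg (by omega : ¬ r.val / μ + 1 = c.val / μ),
      if_neg (by omega : ¬ c.val / μ = r.val / μ + 1)]
    exact if_congr eq_comm ((hS _ (by omega) (by omega)).apply _ _) rfl

lemma subM_isSymm (hm : 0 < m) (hi1 : 1 ≤ i) (hiz : i ≤ z / m) (hdvd : m ∣ z)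
    (hS : ∀ t, 1 ≤ t → t ≤ 2 * z → (S t).IsSymm) :
    (subM z μ m i hμ hm hi1 hiz hdvd S).IsSymm :=
  (dataMatrix_submatrix_castLE_isSymm hμ hS).submatrix
    fun a : Fin (m * μ) => ⟨(i - 1) * (m * μ) + a.val, seg_bound hμ hm hi1 hiz hdvd a.isLt⟩

end DataMatrix

section BlockRows

/-- The `μ × mμ` block row `[A, O, …, O]`. With `A = S_{2(i-1)m}` it is the part of the data matrix
directly above the submatrix `M_i`. -/
def firstBlockRow (m : ℕ) (A : Matrix (Fin μ) (Fin μ) F) : Matrix (Fin μ) (Fin (m * μ)) F :=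
  Matrix.of fun a c => if h : c.val < μ then A a ⟨c.val, h⟩ else 0

/-- The position of entry `b` of the last of the `m` blocks of length `μ` that make up a vector of
length `mμ`. -/
def lastBlock (hm : 0 < m) (b : Fin μ) : Fin (m * μ) :=
  ⟨(m - 1) * μ + b.val, by have := sub_one_mul_add_self (l := μ) hm; omega⟩

lemma firstBlockRow_mulVec (hm : 0 < m) (A : Matrix (Fin μ) (Fin μ) F) (v : Fin (m * μ) → F) :
    firstBlockRow m A *ᵥ v = A *ᵥ (v ∘ Fin.castLE (Nat.le_mul_of_pos_left μ hm)) := by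
  funext a
  have hle : 0 + μ ≤ m * μ := by simpa using Nat.le_mul_of_pos_left μ hm
  refine (sum_fin_eq_sum_window hle _ (by simp) fun c hc => ?_).trans
    (Finset.sum_congr rfl fun b _ => ?_)
  · simp [firstBlockRow, show ¬ c.val < μ by omega]
  · simp [firstBlockRow, Fin.castLE]

variable (hm : 0 < m) {Mi : Matrix (Fin (m * μ)) (Fin (m * μ)) F} {A : Matrix (Fin μ) (Fin μ) F}
  {v : Fin (m * μ) → F}

lemma Nmat_mulVec_top (r : Fin (m * μ)) :
    (Nmat μ m hm Mi A *ᵥ v) (r.castLE (Nat.mul_le_mul_right μ m.le_succ)) = (Mi *ᵥ v) r := by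
  simp [Nmat, mulVec, dotProduct]

lemma Nmat_mulVec_bottom {r : Fin ((m + 1) * μ)} {a : Fin μ} (hr : r.val = m * μ + a.val) :
    (Nmat μ m hm Mi A *ᵥ v) r = (A *ᵥ (v ∘ lastBlock hm)) a := by
  have hlast := sub_one_mul_add_self (l := μ) hm
  refine (sum_fin_eq_sum_window hlast.le _ (fun c hc => ?_) fun c hc => ?_).trans
    (Finset.sum_congr rfl fun b _ => ?_)
  · simp [Nmat, hr, show ¬ (m - 1) * μ ≤ c.val by omega]
  · omega
  · simp [Nmat, hr, lastBlock]

variable {Ω : Matrix (Fin ((m + 1) * μ)) (Fin ((m + 1) * μ)) F}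

lemma ThetaMat_inv_mulVec (hΩ : IsUnit Ω.det) :
    ThetaMat μ m Ω⁻¹ *ᵥ (Ω *ᵥ (Nmat μ m hm Mi A *ᵥ v)) = Mi *ᵥ v := by
  funext r
  change (Ω⁻¹ *ᵥ (Ω *ᵥ (Nmat μ m hm Mi A *ᵥ v))) (r.castLE (Nat.mul_le_mul_right μ m.le_succ)) = _
  rw [mulVec_mulVec, nonsing_inv_mul _ hΩ, one_mulVec, Nmat_mulVec_top]

lemma XiMat_inv_mulVec (hΩ : IsUnit Ω.det) :
    XiMat μ m Ω⁻¹ *ᵥ (Ω *ᵥ (Nmat μ m hm Mi A *ᵥ v)) = A *ᵥ (v ∘ lastBlock hm) := by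
  funext a
  have hlt : m * μ + a.val < (m + 1) * μ := by rw [add_mul]; omega
  change (Ω⁻¹ *ᵥ (Ω *ᵥ (Nmat μ m hm Mi A *ᵥ v))) ⟨m * μ + a.val, hlt⟩ = _
  rw [mulVec_mulVec, nonsing_inv_mul _ hΩ, one_mulVec, Nmat_mulVec_bottom hm rfl]

end BlockRows

section SegmentBounds

lemma segment_start_add_length (hi1 : 1 ≤ i) : (i - 1) * (m * μ) + m * μ = i * m * μ := by
  rw [sub_one_mul_add_self hi1, mul_assoc]

lemma le_segment_start (hm : 0 < m) (hi2 : 2 ≤ i) : μ ≤ (i - 1) * (m * μ) := by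
  rw [← mul_assoc]
  exact Nat.le_mul_of_pos_left μ (Nat.mul_pos (by omega) hm)

lemma segment_window_le (hm : 0 < m) (hi2 : 2 ≤ i) (hiz : i ≤ z / m) :
    (i - 1) * (m * μ) - μ + (μ + (m + 1) * μ) ≤ (z + 1) * μ := by
  have hend := segment_start_add_length (μ := μ) (m := m) (one_le_two.trans hi2)
  have hstart := le_segment_start (μ := μ) hm hi2
  have him : i * m * μ ≤ z * μ := Nat.mul_le_mul_right μ ((Nat.le_div_iff_mul_le hm).1 hiz)
  rw [Nat.succ_mul, Nat.succ_mul]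
  omega

end SegmentBounds

section Segments

variable (hμ : 0 < μ) (hm : 0 < m) (hdvd : m ∣ z) (S : ℕ → Matrix (Fin μ) (Fin μ) F)

lemma dataMatrix_row_above_subM {r : Fin ((z + 1) * μ)} {c : Fin (z * μ)}
    {a : Fin μ} {b : Fin (m * μ)} (hr : r.val + μ = (i - 1) * (m * μ) + a.val)
    (hc : c.val = (i - 1) * (m * μ) + b.val) :
    dataMatrix z μ hμ S r c = firstBlockRow m (S (2 * (i - 1) * m)) a b := by
  rw [← mul_assoc] at hr hc
  by_cases hb : b.val < μ
  · simpa [firstBlockRow, hb, mul_assoc] using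
      dataMatrix_superdiag (b := ⟨b.val, hb⟩) hμ S hr hc
  · have hsucc : ((i - 1) * m + 1) * μ = (i - 1) * m * μ + μ := by ring
    simpa [firstBlockRow, hb] using
      dataMatrix_eq_zero_of_above hμ S (t := (i - 1) * m + 1) (by omega) (by omega)

lemma dataMatrix_row_of_subM (hi1 : 1 ≤ i) (hiz : i ≤ z / m) {r : Fin ((z + 1) * μ)}
    {c : Fin (z * μ)} {a : Fin ((m + 1) * μ)} {b : Fin (m * μ)}
    (hr : r.val = (i - 1) * (m * μ) + a.val) (hc : c.val = (i - 1) * (m * μ) + b.val) :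
    dataMatrix z μ hμ S r c =
      Nmat μ m hm (subM z μ m i hμ hm hi1 hiz hdvd S) (S (2 * i * m)) a b := by
  have hlast := sub_one_mul_add_self (l := μ) hm
  have hend := segment_start_add_length (μ := μ) (m := m) hi1
  by_cases ha : a.val < m * μ
  · simp [Nmat, subM, ha, ← hr, ← hc]
  by_cases hb : (m - 1) * μ ≤ b.val
  · simpa [Nmat, ha, hb, mul_assoc] using
      dataMatrix_subdiag hμ S (t := i * m) (r := r) (c := c)
        (a := ⟨a.val - m * μ, nmat_aux1 a.isLt ha⟩)
        (b := ⟨b.val - (m - 1) * μ, nmat_aux2 hm b.isLt hb⟩)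
        (by simp only; omega) (by simp only; omega)
  · have him : (i * m - 1) * μ + μ = i * m * μ := sub_one_mul_add_self (Nat.mul_pos hi1 hm)
    simpa [Nmat, ha, hb] using
      dataMatrix_eq_zero_of_below hμ S (t := i * m - 1) (by omega) (by omega)

lemma stored_eq_sum_window (hi2 : 2 ≤ i) (hiz : i ≤ z / m) (E : F) {c : Fin (z * μ)}
    {b : Fin (m * μ)} (hc : c.val = (i - 1) * (m * μ) + b.val) :
    stored z μ hμ S E c =
      ∑ a : Fin (μ + (m + 1) * μ), E ^ ((i - 1) * (m * μ) - μ + a.val + 1) *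
        dataMatrix z μ hμ S
          ⟨(i - 1) * (m * μ) - μ + a.val, by have := segment_window_le (μ := μ) hm hi2 hiz; omega⟩
          c := by
  have hstart := le_segment_start (μ := μ) hm hi2
  have hend := segment_start_add_length (μ := μ) (m := m) (one_le_two.trans hi2)
  have hassoc : (i - 1) * m * μ = (i - 1) * (m * μ) := mul_assoc _ _ _
  have hd : (m + 1) * μ = m * μ + μ := Nat.succ_mul m μ
  refine sum_fin_eq_sum_window (segment_window_le hm hi2 hiz) _ (fun r hr => ?_) fun r hr => ?_
  · exact mul_eq_zero_of_right _ <|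
      dataMatrix_eq_zero_of_above hμ S (t := (i - 1) * m) (by omega) (by omega)
  · exact mul_eq_zero_of_right _ <|
      dataMatrix_eq_zero_of_below hμ S (t := i * m) (by omega) (by omega)

lemma xSeg_eq_vecMul_add_vecMul (hi2 : 2 ≤ i) (hiz : i ≤ z / m) (E : F) :
    xSeg z μ m i hμ hm (one_le_two.trans hi2) hiz hdvd S E =
      (fun a => E ^ ((i - 1) * (m * μ) - μ) * phiVec μ E a) ᵥ*
          firstBlockRow m (S (2 * (i - 1) * m)) +
        (fun a : Fin ((m + 1) * μ) => E ^ ((i - 1) * (m * μ) + a.val + 1)) ᵥ*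
          Nmat μ m hm (subM z μ m i hμ hm (one_le_two.trans hi2) hiz hdvd S) (S (2 * i * m)) := by
  have hi1 : 1 ≤ i := one_le_two.trans hi2
  have hstart := le_segment_start (μ := μ) hm hi2
  funext c
  rw [xSeg, stored_eq_sum_window hμ hm S hi2 hiz E (b := c) rfl, Fin.sum_univ_add]
  refine congrArg₂ (· + ·) (Finset.sum_congr rfl fun a _ => ?_)
    (Finset.sum_congr rfl fun a _ => ?_)
  · rw [dataMatrix_row_above_subM hμ S (a := a) (b := c)
      (by simp only [Fin.val_castAdd]; omega) rfl]
    simp only [phiVec, Fin.val_castAdd, ← pow_add, add_assoc]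
  · rw [dataMatrix_row_of_subM hμ hm hdvd S hi1 hiz (a := a) (b := c)
      (by simp only [Fin.val_natAdd]; omega) rfl]
    simp only [Fin.val_natAdd]
    congr 2
    omega

end Segments

lemma isUnit_det_OmegaMat {e : Fin n → F} {ℓ : Fin ((m + 1) * μ) → Fin n}
    (h0 : ∀ r, e (ℓ r) ≠ 0) (hinj : Function.Injective (e ∘ ℓ)) (i : ℕ) :
    IsUnit (OmegaMat n μ m i e ℓ).det := by
  have hscale : OmegaMat n μ m i e ℓ = Matrix.of fun r c =>
      e (ℓ r) ^ ((i - 1) * (m * μ) + 1) * vandermonde (e ∘ ℓ) r c := by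
    ext r c
    simp only [OmegaMat, of_apply, vandermonde_apply, Function.comp_apply, ← pow_add]
    congr 1
    omega
  rw [hscale, det_mul_column, isUnit_iff_ne_zero]
  exact mul_ne_zero (prod_ne_zero_iff.2 fun r _ => pow_ne_zero _ (h0 r))
    (det_vandermonde_ne_zero_iff.2 hinj)

section PsiSeg

variable (e : F)

lemma psiSeg_comp_castLE (hm : 0 < m) :
    psiSeg m μ i e ∘ Fin.castLE (Nat.le_mul_of_pos_left μ hm) =
      fun a => e ^ ((i - 1) * (m * μ)) * phiVec μ e a := by
  funext a
  simp only [psiSeg, phiVec, Function.comp_apply, Fin.val_castLE, ← pow_add, add_assoc]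

lemma pow_smul_psiSeg_comp_lastBlock (hm : 0 < m) (hi1 : 1 ≤ i) :
    e ^ μ • (psiSeg m μ i e ∘ lastBlock hm) = e ^ (i * (m * μ)) • phiVec μ e := by
  have hlast := sub_one_mul_add_self (l := μ) hm
  have hend := segment_start_add_length (μ := μ) (m := m) hi1
  funext a
  simp only [Pi.smul_apply, smul_eq_mul, Function.comp_apply, psiSeg, lastBlock, phiVec, ← pow_add,
    ← mul_assoc i]
  congr 1
  omega

lemma pow_smul_phiVec_vecMul (hm : 0 < m) (hi1 : 1 ≤ i) {A : Matrix (Fin μ) (Fin μ) F}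
    (hA : A.IsSymm) :
    e ^ (i * (m * μ)) • (phiVec μ e ᵥ* A) =
      e ^ μ • (A *ᵥ (psiSeg m μ i e ∘ lastBlock hm)) := by
  rw [vecMul_eq_mulVec_of_isSymm hA, ← mulVec_smul, ← mulVec_smul,
    pow_smul_psiSeg_comp_lastBlock e hm hi1]

end PsiSeg

section Repair

variable (hμ : 0 < μ) (hm : 0 < m) (hdvd : m ∣ z) (hi2 : 2 ≤ i) (hiz : i ≤ z / m)
  (S : ℕ → Matrix (Fin μ) (Fin μ) F)

lemma repairSym_eq_dotProduct_add_dotProduct (eh ef : F) :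
    repairSym z μ m i hμ hm (one_le_two.trans hi2) hiz hdvd S eh ef =
      (fun a => eh ^ ((i - 1) * (m * μ) - μ) * phiVec μ eh a) ⬝ᵥ
          (S (2 * (i - 1) * m) *ᵥ fun a => ef ^ ((i - 1) * (m * μ)) * phiVec μ ef a) +
        (fun a : Fin ((m + 1) * μ) => eh ^ ((i - 1) * (m * μ) + a.val + 1)) ⬝ᵥ
          (Nmat μ m hm (subM z μ m i hμ hm (one_le_two.trans hi2) hiz hdvd S) (S (2 * i * m)) *ᵥ
            psiSeg m μ i ef) := by
  change xSeg z μ m i hμ hm (one_le_two.trans hi2) hiz hdvd S eh ⬝ᵥ psiSeg m μ i ef = _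
  rw [xSeg_eq_vecMul_add_vecMul hμ hm hdvd S hi2 hiz, add_dotProduct, ← dotProduct_mulVec,
    ← dotProduct_mulVec, firstBlockRow_mulVec hm, psiSeg_comp_castLE ef hm]

lemma repairSym_sub_eq_OmegaMat_mulVec (e : Fin n → F) (ℓ : Fin ((m + 1) * μ) → Fin n) (ef : F) :
    (fun r => repairSym z μ m i hμ hm (one_le_two.trans hi2) hiz hdvd S (e (ℓ r)) ef) -
        (Matrix.of fun (r : Fin ((m + 1) * μ)) (c : Fin μ) =>
            e (ℓ r) ^ ((i - 1) * (m * μ) - μ) * phiVec μ (e (ℓ r)) c) *ᵥ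
          (S (2 * (i - 1) * m) *ᵥ fun a => ef ^ ((i - 1) * (m * μ)) * phiVec μ ef a) =
      OmegaMat n μ m i e ℓ *ᵥ
        (Nmat μ m hm (subM z μ m i hμ hm (one_le_two.trans hi2) hiz hdvd S) (S (2 * i * m)) *ᵥ
          psiSeg m μ i ef) := by
  funext r
  rw [Pi.sub_apply, repairSym_eq_dotProduct_add_dotProduct hμ hm hdvd hi2 hiz]
  exact add_sub_cancel_left _ _

end Repair

end RepairDecoding

/-- for every `2 ≤ i ≤ β = z/m`, with
`Υ̂_H(i) = Υ_H(i) - W_i ⬝ S_{2(i-1)m} ⬝ (e_f^{(i-1)mμ} φ_f)ᵀ` and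
`(Ω_H(i))⁻¹ = [Θ_H(i); Ξ_H(i)]`, we have `ψ_f(i) M_i = (Θ_H(i) Υ̂_H(i))ᵀ` and
`e_f^{imμ} φ_f S_{2im} = e_f^μ (Ξ_H(i) Υ̂_H(i))ᵀ`. -/
theorem repair_decode_stepi {F : Type*} [Field F] (μ z m n : ℕ) (hμ : 0 < μ)
    (hz : 0 < z) (hm : 0 < m) (hdvd : m ∣ z) (hn : 0 < n)
    (e : Fin n → F) (he : ∀ j, e j ≠ 0) (heinj : Function.Injective e)
    (S : ℕ → Matrix (Fin μ) (Fin μ) F) (hS : ∀ t, 1 ≤ t → t ≤ 2 * z → (S t).IsSymm)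
    (f : Fin n) (ℓ : Fin ((m + 1) * μ) → Fin n) (hℓ : Function.Injective ℓ)
    (hℓf : ∀ r, ℓ r ≠ f) :
    ∀ i, ∀ hi2 : 2 ≤ i, ∀ hiz : i ≤ z / m,
    let ΥHat : Fin ((m + 1) * μ) → F :=
      (fun r : Fin ((m + 1) * μ) =>
          repairSym z μ m i hμ hm (by omega) hiz hdvd S (e (ℓ r)) (e f))
        - Matrix.mulVec
            (Matrix.of fun (r : Fin ((m + 1) * μ)) (c : Fin μ) =>
              e (ℓ r) ^ ((i - 1) * (m * μ) - μ) * phiVec μ (e (ℓ r)) c)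
            (Matrix.mulVec (S (2 * (i - 1) * m))
              (fun a => e f ^ ((i - 1) * (m * μ)) * phiVec μ (e f) a))
    (Matrix.vecMul (psiSeg m μ i (e f)) (subM z μ m i hμ hm (by omega) hiz hdvd S)
        = Matrix.mulVec (ThetaMat μ m (OmegaMat n μ m i e ℓ)⁻¹) ΥHat)
    ∧ ((fun c : Fin μ => e f ^ (i * (m * μ)) * Matrix.vecMul (phiVec μ (e f)) (S (2 * i * m)) c)
        = fun c : Fin μ => e f ^ μ * Matrix.mulVec (XiMat μ m (OmegaMat n μ m i e ℓ)⁻¹) ΥHat c) := by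
  intro i hi2 hiz ΥHat
  have hi1 : 1 ≤ i := one_le_two.trans hi2
  have hΩ := isUnit_det_OmegaMat (fun r => he (ℓ r)) (heinj.comp hℓ) i
  have hΥ : ΥHat = _ := repairSym_sub_eq_OmegaMat_mulVec hμ hm hdvd hi2 hiz S e ℓ (e f)
  have hSymm : (S (2 * i * m)).IsSymm := by
    have him_pos : 0 < i * m := Nat.mul_pos hi1 hm
    have him_le : i * m ≤ z := (Nat.le_div_iff_mul_le hm).1 hiz
    exact hS _ (by rw [mul_assoc]; omega) (by rw [mul_assoc]; omega)
  rw [hΥ]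
  constructor
  · rw [ThetaMat_inv_mulVec hm hΩ, vecMul_eq_mulVec_of_isSymm (subM_isSymm hμ hm hi1 hiz hdvd hS)]
  · rw [XiMat_inv_mulVec hm hΩ]
    exact pow_smul_phiVec_vecMul (e f) hm hi1 hSymm
end

section
/- Let F be a field, μ ≥ 1, z ≥ 1, n ≥ 1, with pairwise distinct nonzero elements e_1, …, e_n of F, let m ≥ 1 divide z, set d = (m+1)μ and β = z/m, and let M be the data matrix built from symmetric μ × μ matrices S_1, …, S_{2z}. For any node index f, the first mμ entries of x_f = ψ_f M satisfy x_f(1) = ψ_f(1) M_1 + [0, …, 0, e_f^{mμ} φ_f S_{2m}], where the zero padding has length (m−1)μ; that is, the i = 1 segment of the stored content decomposes as the product of ψ_f(1) with the symmetric diagonal submatrix M_1 plus a term supported on the last μ coordinates given by e_f^{mμ} φ_f S_{2m}. -/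
open Matrix Finset

/-!
Cut `ψ` and `M` into blocks of length `μ`, numbered from `0`. The `t`-th block of `ψ` is
`e^{tμ} φ`, so the `q`-th block of `ψ M` is `∑ t, e^{tμ} φ B(t, q)`, and `ψ(1) M₁` collects the
terms `t < m`. For `q < m`, block tridiagonality kills every term `t ≥ m` except `t = m`, and that
one survives only for `q = m - 1`, where the block is `S_{2m}`.
-/

section BlockTridiagonal

variable {R : Type*} {μ : ℕ}

/-- The `μ × μ` block of the data matrix in block row `t` and block column `q`. Blocks are indexed
from `0` and by all natural numbers, so that data matrices of every size share the same blocks: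
`dataBlock S t q` is the paper's `B(t+1, q+1)`. -/
def dataBlock [Zero R] (S : ℕ → Matrix (Fin μ) (Fin μ) R) (t q : ℕ) :
    Matrix (Fin μ) (Fin μ) R :=
  if t = q then S (2 * q + 1)
  else if t + 1 = q then S (2 * t + 2)
  else if t = q + 1 then S (2 * q + 2)
  else 0

theorem dataBlock_apply [Zero R] (S : ℕ → Matrix (Fin μ) (Fin μ) R) (t q : ℕ) (u v : Fin μ) :
    dataBlock S t q u v =
      if t = q then S (2 * q + 1) u v
      else if t + 1 = q then S (2 * t + 2) u v
      else if t = q + 1 then S (2 * q + 2) u v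
      else 0 := by
  unfold dataBlock
  split_ifs <;> rfl

theorem dataBlock_succ_self [Zero R] (S : ℕ → Matrix (Fin μ) (Fin μ) R) (q : ℕ) :
    dataBlock S (q + 1) q = S (2 * (q + 1)) := by
  rw [dataBlock, if_neg (by omega), if_neg (by omega), if_pos rfl, mul_add_one]

theorem dataBlock_eq_zero_of_succ_lt [Zero R] (S : ℕ → Matrix (Fin μ) (Fin μ) R) {t q : ℕ}
    (h : q + 1 < t) : dataBlock S t q = 0 := by
  rw [dataBlock, if_neg (by omega), if_neg (by omega), if_neg (by omega)]

theorem sum_Ico_smul_vecMul_dataBlock [NonUnitalNonAssocSemiring R]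
    (S : ℕ → Matrix (Fin μ) (Fin μ) R) (w : ℕ → R) (v : Fin μ → R)
    {q m n : ℕ} (hqm : q < m) (hmn : m < n) :
    ∑ t ∈ Ico m n, w t • (v ᵥ* dataBlock S t q) =
      if q + 1 = m then w m • (v ᵥ* S (2 * m)) else 0 := by
  have only_first : ∑ t ∈ Ico m n, w t • (v ᵥ* dataBlock S t q) =
      w m • (v ᵥ* dataBlock S m q) := by
    refine sum_eq_single_of_mem m (left_mem_Ico.mpr hmn) fun t ht _ ↦ ?_
    have hqt : q + 1 < t := by have := (mem_Ico.mp ht).1; omega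
    rw [dataBlock_eq_zero_of_succ_lt S hqt, vecMul_zero, smul_zero]
  rw [only_first]
  split_ifs with h
  · rw [← h, dataBlock_succ_self]
  · rw [dataBlock_eq_zero_of_succ_lt S (by omega), vecMul_zero, smul_zero]

end BlockTridiagonal

section LastBlock

variable {μ m : ℕ}

theorem divNat_add_one_eq_iff (a : Fin (m * μ)) :
    (a.divNat : ℕ) + 1 = m ↔ (m - 1) * μ ≤ a := by
  have hμ : 0 < μ := Nat.pos_of_mul_pos_left a.pos
  have hlt : (a.divNat : ℕ) < m := a.divNat.isLt
  rw [← Nat.le_div_iff_mul_le hμ, ← Fin.coe_divNat]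
  omega

theorem modNat_eq_of_pred_mul_le (hm : 0 < m) (a : Fin (m * μ)) (h : (m - 1) * μ ≤ a) :
    a.modNat = ⟨a - (m - 1) * μ, nmat_aux2 hm a.isLt h⟩ := by
  have hdiv : (a : ℕ) / μ = m - 1 := Nat.eq_sub_of_add_eq ((divNat_add_one_eq_iff a).mpr h)
  rw [Fin.ext_iff, Fin.coe_modNat, Nat.mod_eq_sub_div_mul, hdiv]

end LastBlock

section StoredContent

variable {F : Type*} [Field F] {μ z m : ℕ}

theorem phiVec_mul_vecMul {ι : Type*} (k : ℕ) (e : F) (A : Matrix (Fin (k * μ)) ι F) :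
    phiVec (k * μ) e ᵥ* A =
      ∑ t : Fin k, e ^ (t * μ : ℕ) •
        (phiVec μ e ᵥ* A.submatrix (fun u ↦ finProdFinEquiv (t, u)) id) := by
  ext c
  have phiVec_block (t : Fin k) (u : Fin μ) :
      phiVec (k * μ) e (finProdFinEquiv (t, u)) = e ^ (t * μ : ℕ) * phiVec μ e u := by
    simp only [phiVec, finProdFinEquiv_apply_val]
    ring
  simp only [vecMul, dotProduct, Finset.sum_apply, Pi.smul_apply, smul_eq_mul, mul_sum,
    submatrix_apply, id, ← finProdFinEquiv.sum_comp, Fintype.sum_prod_type, phiVec_block,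
    mul_assoc]

theorem dataMatrix_apply (hμ : 0 < μ) (S : ℕ → Matrix (Fin μ) (Fin μ) F)
    (r : Fin ((z + 1) * μ)) (c : Fin (z * μ)) :
    dataMatrix z μ hμ S r c = dataBlock S r.divNat c.divNat r.modNat c.modNat :=
  (dataBlock_apply S r.divNat c.divNat r.modNat c.modNat).symm

theorem dataMatrix_submatrix_finProdFinEquiv_vecMul_apply (hμ : 0 < μ)
    (S : ℕ → Matrix (Fin μ) (Fin μ) F) (v : Fin μ → F) (t : Fin (z + 1)) (c : Fin (z * μ)) :
    (v ᵥ* (dataMatrix z μ hμ S).submatrix (fun u ↦ finProdFinEquiv (t, u)) id) c =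
      (v ᵥ* dataBlock S t c.divNat) c.modNat := by
  have block_row (u : Fin μ) : dataMatrix z μ hμ S (finProdFinEquiv (t, u)) c =
      dataBlock S t c.divNat u c.modNat := by
    have index : ((finProdFinEquiv (t, u)).divNat, (finProdFinEquiv (t, u)).modNat) = (t, u) :=
      finProdFinEquiv.symm_apply_apply (t, u)
    rw [dataMatrix_apply, (Prod.mk.inj index).1, (Prod.mk.inj index).2]
  simp only [vecMul, dotProduct, submatrix_apply, id, block_row]

theorem phiVec_vecMul_dataMatrix_submatrix_castLE_apply (hμ : 0 < μ)
    (S : ℕ → Matrix (Fin μ) (Fin μ) F) (e : F) {k : ℕ} (hk : k ≤ z + 1) (c : Fin (z * μ)) :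
    (phiVec (k * μ) e ᵥ*
        (dataMatrix z μ hμ S).submatrix (Fin.castLE (Nat.mul_le_mul_right μ hk)) id) c =
      (∑ t ∈ range k, e ^ (t * μ) • (phiVec μ e ᵥ* dataBlock S t c.divNat)) c.modNat := by
  rw [phiVec_mul_vecMul, ← Fin.sum_univ_eq_sum_range
    (fun t ↦ e ^ (t * μ) • (phiVec μ e ᵥ* dataBlock S t c.divNat))]
  simp only [Finset.sum_apply, Pi.smul_apply]
  refine sum_congr rfl fun t _ ↦ congrArg (e ^ (t * μ : ℕ) • ·) ?_
  exact dataMatrix_submatrix_finProdFinEquiv_vecMul_apply hμ S (phiVec μ e) (t.castLE hk) c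

theorem stored_apply (hμ : 0 < μ) (S : ℕ → Matrix (Fin μ) (Fin μ) F) (e : F)
    (c : Fin (z * μ)) :
    stored z μ hμ S e c =
      (∑ t ∈ range (z + 1), e ^ (t * μ) • (phiVec μ e ᵥ* dataBlock S t c.divNat)) c.modNat :=
  -- By definition `ψ` is the vector `φ` of length `(z + 1) * μ`; the cast along `le_rfl` is `id`.
  phiVec_vecMul_dataMatrix_submatrix_castLE_apply hμ S e le_rfl c

theorem psiSeg_one (e : F) : psiSeg m μ 1 e = phiVec (m * μ) e := by
  funext a
  simp only [psiSeg, phiVec, Nat.sub_self, zero_mul, zero_add]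

theorem xSeg_one_apply (hμ : 0 < μ) (hm : 0 < m) (h1z : 1 ≤ z / m) (hdvd : m ∣ z)
    (S : ℕ → Matrix (Fin μ) (Fin μ) F) (e : F) (a : Fin (m * μ)) :
    xSeg z μ m 1 hμ hm le_rfl h1z hdvd S e a =
      stored z μ hμ S e (a.castLE (Nat.mul_le_mul_right μ ((Nat.one_le_div_iff hm).mp h1z))) := by
  simp only [xSeg, Nat.sub_self, zero_mul, zero_add]
  rfl

theorem subM_one (hμ : 0 < μ) (hm : 0 < m) (h1z : 1 ≤ z / m) (hdvd : m ∣ z)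
    (S : ℕ → Matrix (Fin μ) (Fin μ) F) :
    subM z μ m 1 hμ hm le_rfl h1z hdvd S =
      (dataMatrix z μ hμ S).submatrix
        (Fin.castLE (Nat.mul_le_mul_right μ
          (((Nat.one_le_div_iff hm).mp h1z).trans z.le_succ)))
        (Fin.castLE (Nat.mul_le_mul_right μ ((Nat.one_le_div_iff hm).mp h1z))) := by
  ext a b
  simp only [subM, of_apply, Nat.sub_self, zero_mul, zero_add]
  rfl

end StoredContent

theorem stored_first_segment_decomposition_general {F : Type*} [Field F] (μ z m : ℕ)
    (hμ : 0 < μ) (hm : 0 < m) (hmz : m ≤ z) (S : ℕ → Matrix (Fin μ) (Fin μ) F) (e : F)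
    (a : Fin (m * μ)) :
    stored z μ hμ S e (a.castLE (Nat.mul_le_mul_right μ hmz)) =
      (phiVec (m * μ) e ᵥ* (dataMatrix z μ hμ S).submatrix
          (Fin.castLE (Nat.mul_le_mul_right μ (hmz.trans z.le_succ)))
          (Fin.castLE (Nat.mul_le_mul_right μ hmz))) a
        + if h : (m - 1) * μ ≤ a.val then
            e ^ (m * μ) *
              (phiVec μ e ᵥ* S (2 * m)) ⟨a.val - (m - 1) * μ, nmat_aux2 hm a.isLt h⟩
          else 0 := by
  have leading := phiVec_vecMul_dataMatrix_submatrix_castLE_apply hμ S e (hmz.trans z.le_succ)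
    (a.castLE (Nat.mul_le_mul_right μ hmz))
  have boundary := sum_Ico_smul_vecMul_dataBlock S (fun t ↦ e ^ (t * μ)) (phiVec μ e)
    a.divNat.isLt (Nat.lt_succ_of_le hmz)
  rw [stored_apply, ← sum_range_add_sum_Ico _ (hmz.trans z.le_succ), Pi.add_apply, ← leading]
  congr 1
  refine (congrFun boundary a.modNat).trans ?_
  simp only [divNat_add_one_eq_iff]
  split_ifs with h
  · rw [Pi.smul_apply, smul_eq_mul, modNat_eq_of_pred_mul_le hm a h]
  · rw [Pi.zero_apply]

/-- for any node `f`, the first `mμ` entries of `x_f = ψ_f M` decompose as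
`x_f(1) = ψ_f(1) M₁ + [0, …, 0, e_f^{mμ} φ_f S_{2m}]`, where the zero padding has length
`(m-1)μ` and `M₁` is the symmetric leading `mμ × mμ` diagonal submatrix of `M`. -/
theorem stored_first_segment_decomposition {F : Type*} [Field F] (μ z m n : ℕ)
    (hμ : 0 < μ) (hz : 0 < z) (hm : 0 < m) (hdvd : m ∣ z) (hn : 0 < n)
    (e : Fin n → F) (he : ∀ j, e j ≠ 0) (heinj : Function.Injective e)
    (S : ℕ → Matrix (Fin μ) (Fin μ) F) (hS : ∀ t, 1 ≤ t → t ≤ 2 * z → (S t).IsSymm)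
    (f : Fin n) :
    let h1z : 1 ≤ z / m := (Nat.one_le_div_iff hm).mpr (Nat.le_of_dvd hz hdvd)
    ∀ a : Fin (m * μ),
      xSeg z μ m 1 hμ hm (le_refl 1) h1z hdvd S (e f) a
        = Matrix.vecMul (psiSeg m μ 1 (e f)) (subM z μ m 1 hμ hm (le_refl 1) h1z hdvd S) a
          + if h2 : (m - 1) * μ ≤ a.val then
              e f ^ (m * μ) *
                Matrix.vecMul (phiVec μ (e f)) (S (2 * m))
                  ⟨a.val - (m - 1) * μ, nmat_aux2 hm a.isLt h2⟩
            else 0 := by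
  intro h1z a
  rw [xSeg_one_apply, subM_one, psiSeg_one]
  exact stored_first_segment_decomposition_general μ z m hμ hm (Nat.le_of_dvd hz hdvd) S (e f) a
end
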